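/- For every n×n positive definite hermitian matrix ρ, every α ∈ ℝ, and every A ∈ M_n(ℂ), the number tr[A† Ω_ρ^α(A)] is real and nonnegative, and tr[A† Ω_ρ^α(A)] = 0 if and only if A = 0. Hence (A,B) ↦ tr[A† Ω_ρ^α(B)] is a positive definite sesquilinear form on M_n(ℂ). -/

import Mathlib

open scoped Matrix ComplexOrder
/-- Real power `ρ^t` of a hermitian matrix, defined through the spectral
decomposition (continuous functional calculus applied to `x ↦ x ^ t`). -/
noncomputable def matrixRpow {n : Type*} [Fintype n] [DecidableEq n]
    {ρ : Matrix n n ℂ} (hρ : ρ.IsHermitian) (t : ℝ) : Matrix n n ℂ :=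
  hρ.cfc fun x => x ^ t

/-- The superoperator `Ω_ρ^α(σ) = (1/2)(ρ^{-α} σ ρ^{α-1} + ρ^{α-1} σ ρ^{-α})`. -/
noncomputable def Omega {n : Type*} [Fintype n] [DecidableEq n]
    {ρ : Matrix n n ℂ} (hρ : ρ.IsHermitian) (α : ℝ) (σ : Matrix n n ℂ) : Matrix n n ℂ :=
  (1 / 2 : ℂ) • (matrixRpow hρ (-α) * σ * matrixRpow hρ (α - 1)
    + matrixRpow hρ (α - 1) * σ * matrixRpow hρ (-α))

/-!
Under the column-stacking isometry `vec`, the map `A ↦ P * A * Q` becomes multiplication by the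
Kronecker product `Qᵀ ⊗ₖ P`, which is positive definite as soon as `P` and `Q` are. All real powers
of a positive definite `ρ` are positive definite, so `Ω_ρ^α` is an average of two such maps.
-/

section

open Matrix Kronecker

variable {m n R 𝕜 : Type*} [CommSemiring R] [Star R] [RCLike 𝕜] [Fintype m] [Fintype n]

theorem trace_conjTranspose_mul_mul_mul_eq_kronecker (A B : Matrix m n R) (P : Matrix m m R)
    (Q : Matrix n n R) :
    trace (Aᴴ * (P * B * Q)) = star (vec A) ⬝ᵥ ((Qᵀ ⊗ₖ P) *ᵥ vec B) := by
  rw [kronecker_mulVec_vec, transpose_transpose, star_vec_dotProduct_vec]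

theorem trace_conjTranspose_mul_mul_mul_pos {P : Matrix m m 𝕜} {Q : Matrix n n 𝕜}
    (hP : P.PosDef) (hQ : Q.PosDef) {A : Matrix m n 𝕜} (hA : A ≠ 0) :
    0 < trace (Aᴴ * (P * A * Q)) := by
  rw [trace_conjTranspose_mul_mul_mul_eq_kronecker]
  exact (hQ.transpose.kronecker hP).dotProduct_mulVec_pos (vec_eq_zero_iff.not.mpr hA)

variable [DecidableEq n]

theorem posDef_cfc_iff_forall_eigenvalues_pos {A : Matrix n n 𝕜} (hA : A.IsHermitian)
    (f : ℝ → ℝ) : (hA.cfc f).PosDef ↔ ∀ i, 0 < f (hA.eigenvalues i) := by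
  simp [IsHermitian.cfc, Unitary.isUnit_coe.posDef_star_right_conjugate_iff]

theorem posDef_matrixRpow {ρ : Matrix n n ℂ} (hρ : ρ.PosDef) (t : ℝ) :
    (matrixRpow hρ.1 t).PosDef :=
  (posDef_cfc_iff_forall_eigenvalues_pos hρ.1 _).mpr fun i ↦
    Real.rpow_pos_of_pos (hρ.eigenvalues_pos i) t

theorem trace_conjTranspose_mul_omega_pos {ρ : Matrix n n ℂ} (hρ : ρ.PosDef) (α : ℝ)
    {A : Matrix n n ℂ} (hA : A ≠ 0) : 0 < trace (Aᴴ * Omega hρ.1 α A) := by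
  have hneg := posDef_matrixRpow hρ (-α)
  have hsub := posDef_matrixRpow hρ (α - 1)
  rw [Omega, Matrix.mul_smul, trace_smul, Matrix.mul_add, trace_add]
  exact smul_pos one_half_pos <| add_pos
    (trace_conjTranspose_mul_mul_mul_pos hneg hsub hA)
    (trace_conjTranspose_mul_mul_mul_pos hsub hneg hA)

end

/-- `tr[A† Ω_ρ^α(A)]` is real and nonnegative (here expressed via the complex order),
and it vanishes iff `A = 0`; hence `(A,B) ↦ tr[A† Ω_ρ^α(B)]` is positive definite. -/
theorem omega_posDef_form {n : Type*} [Fintype n] [DecidableEq n]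
    {ρ : Matrix n n ℂ} (hρ : ρ.PosDef) (α : ℝ) (A : Matrix n n ℂ) :
    0 ≤ Matrix.trace (Aᴴ * Omega hρ.1 α A) ∧
      (Matrix.trace (Aᴴ * Omega hρ.1 α A) = 0 ↔ A = 0) := by
  rcases eq_or_ne A 0 with rfl | hA
  · simp
  · have hpos := trace_conjTranspose_mul_omega_pos hρ α hA
    exact ⟨hpos.le, iff_of_false hpos.ne' hA⟩
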